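/- arXiv:1603.08433 — 2 statements merged into one kernel-verified Lean document; each statement's English description precedes it below -/
import Mathlib

section
/- Let Γ be a finite simple graph admitting a commuting partition. Then Γ is in 𝒩ℬ: there do not exist three distinct vertices a, b, c of Γ such that a and b are adjacent while c is adjacent to neither a nor b. -/
/-!
Vertices in distinct parts are adjacent, so a vertex `c` adjacent to neither `a` nor `b` lies in
the same part as both of them. That part is not `P 0`, whose vertices are adjacent to every other
vertex, so it is independent, and `a`, `b` cannot be adjacent.
-/

/-- Γ is in the class 𝒩ℬ: there are no three distinct vertices `a, b, c`
such that `a` and `b` are adjacent while `c` is adjacent to neither. -/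
def InNB {V : Type*} (Γ : SimpleGraph V) : Prop :=
  ¬ ∃ a b c : V, a ≠ b ∧ a ≠ c ∧ b ≠ c ∧ Γ.Adj a b ∧ ¬ Γ.Adj a c ∧ ¬ Γ.Adj b c

/-- `P : Fin (n+1) → Set V` is a commuting partition of `Γ`:
it is a partition of the vertices, all parts except possibly `P 0` are nonempty,
`P 0` is exactly the set of vertices adjacent to every other vertex (eccentricity one),
distinct vertices in a common part `P k` for `k ≥ 1` are non-adjacent,
and vertices in distinct parts are adjacent. -/
def IsCommutingPartition {V : Type*} (Γ : SimpleGraph V) (n : ℕ)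
    (P : Fin (n + 1) → Set V) : Prop :=
  (∀ v : V, ∃! i : Fin (n + 1), v ∈ P i) ∧
  (∀ i : Fin (n + 1), i ≠ 0 → (P i).Nonempty) ∧
  (P 0 = {v : V | ∀ w : V, w ≠ v → Γ.Adj v w}) ∧
  (∀ i : Fin (n + 1), i ≠ 0 → ∀ u ∈ P i, ∀ v ∈ P i, u ≠ v → ¬ Γ.Adj u v) ∧
  (∀ i j : Fin (n + 1), i ≠ j → ∀ u ∈ P i, ∀ v ∈ P j, Γ.Adj u v)

theorem nb_of_commuting_partition {V : Type*} [Fintype V] (Γ : SimpleGraph V)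
    (n : ℕ) (P : Fin (n + 1) → Set V) (hP : IsCommutingPartition Γ n P) :
    InNB Γ := by
  obtain ⟨hpart, -, hP0, hindep, hadj⟩ := hP
  rintro ⟨a, b, c, hab, hac, hbc, hAab, hnac, hnbc⟩
  obtain ⟨i, hi, -⟩ := hpart a
  obtain ⟨j, hj, -⟩ := hpart b
  obtain ⟨k, hk, -⟩ := hpart c
  -- Non-adjacency to `c` forces both `a` and `b` into the part of `c`.
  obtain rfl : i = k := by
    by_contra h
    exact hnac (hadj i k h a hi c hk)
  obtain rfl : j = i := by
    by_contra h
    exact hnbc (hadj j i h b hj c hk)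
  by_cases h0 : j = 0
  · subst h0
    rw [hP0] at hi
    exact hnac (hi c hac.symm)
  · exact hindep j h0 a hi b hj hab hAab
end

section
/- Let Γ be a finite simple graph in 𝒩ℬ, i.e., with no three distinct vertices a, b, c such that a and b are adjacent while c is adjacent to neither a nor b. Then Γ admits a commuting partition. -/
lemma InNB.not_adj_trans {V : Type*} {Γ : SimpleGraph V} (hΓ : InNB Γ) {u v w : V}
    (huv : ¬ Γ.Adj u v) (hvw : ¬ Γ.Adj v w) : ¬ Γ.Adj u w := by
  intro huw
  refine hΓ ⟨u, w, v, huw.ne, ?_, ?_, huw, huv, fun h => hvw h.symm⟩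
  · rintro rfl
    exact hvw huw
  · rintro rfl
    exact huv huw

/-- Non-adjacency as an equivalence relation on the vertices that are not adjacent to every other
vertex. -/
def nonAdjSetoid {V : Type*} {Γ : SimpleGraph V} (hΓ : InNB Γ) :
    Setoid {v : V // ¬ ∀ w : V, w ≠ v → Γ.Adj v w} where
  r u v := ¬ Γ.Adj u v
  iseqv := ⟨fun _ => Γ.irrefl, fun h h' => h h'.symm, fun h h' => hΓ.not_adj_trans h h'⟩

theorem commuting_partition_of_nb {V : Type*} [Fintype V] (Γ : SimpleGraph V)
    (hΓ : InNB Γ) :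
    ∃ (n : ℕ) (P : Fin (n + 1) → Set V), IsCommutingPartition Γ n P := by
  classical
  obtain ⟨n, ⟨e⟩⟩ := Finite.exists_equiv_fin (Quotient (nonAdjSetoid hΓ))
  let idx : V → Fin (n + 1) := fun v =>
    if h : ∀ w : V, w ≠ v → Γ.Adj v w then 0 else (e (Quotient.mk (nonAdjSetoid hΓ) ⟨v, h⟩)).succ
  have idx_pos : ∀ v, (∀ w : V, w ≠ v → Γ.Adj v w) → idx v = 0 := fun v h => dif_pos h
  have idx_neg : ∀ v (h : ¬ ∀ w : V, w ≠ v → Γ.Adj v w),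
      idx v = (e (Quotient.mk (nonAdjSetoid hΓ) ⟨v, h⟩)).succ := fun v h => dif_neg h
  have idx_zero : ∀ v, idx v = 0 ↔ ∀ w : V, w ≠ v → Γ.Adj v w := by
    intro v
    refine ⟨fun h => ?_, idx_pos v⟩
    by_contra hv
    exact Fin.succ_ne_zero _ ((idx_neg v hv).symm.trans h)
  have idx_eq : ∀ u v, idx u ≠ 0 → idx v ≠ 0 → (idx u = idx v ↔ ¬ Γ.Adj u v) := by
    intro u v hu hv
    rw [Ne, idx_zero] at hu hv
    rw [idx_neg u hu, idx_neg v hv, Fin.succ_inj, e.apply_eq_iff_eq, Quotient.eq]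
    rfl
  refine ⟨n, fun i => {v | idx v = i}, fun v => ⟨idx v, rfl, fun _ h => h.symm⟩, ?_, ?_, ?_, ?_⟩
  · intro i hi
    obtain ⟨j, rfl⟩ := Fin.exists_succ_eq.2 hi
    obtain ⟨⟨v, hv⟩, hq⟩ := Quotient.exists_rep (e.symm j)
    refine ⟨v, (idx_neg v hv).trans ?_⟩
    exact congrArg Fin.succ ((congrArg e hq).trans (e.apply_symm_apply j))
  · ext v
    exact idx_zero v
  · rintro i hi u rfl v hv -
    exact (idx_eq u v hi (hv.symm ▸ hi)).1 hv.symm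
  · rintro _ _ hij u rfl v rfl
    have huv : u ≠ v := fun h => hij (congrArg idx h)
    by_cases hu : idx u = 0
    · exact (idx_zero u).1 hu v huv.symm
    by_cases hv : idx v = 0
    · exact ((idx_zero v).1 hv u huv).symm
    · by_contra h
      exact hij ((idx_eq u v hu hv).2 h)
end
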